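/- arXiv:2309.11078 — 10 statements merged into one kernel-verified Lean document; each statement's English description precedes it below -/
import Mathlib

section
/- Let S be a semigroup with functions e, s : S → S satisfying conditions (A1) and (A2). Then for every idempotent f ∈ E(S), the Clifford component S_f = {a ∈ S : e(a) = f} contains f, is closed under multiplication and under s, and is a group under the induced multiplication with identity element f and with inversion given by s. Consequently S is the disjoint union of the groups S_f for f ∈ E(S). -/
/-- Condition (A1): for all x, x·e(x) = e(x)·x = x, and every f with
x·f = f·x = x satisfies e(x)·f = f·e(x) = e(x). -/
def CondA1 {S : Type*} [Semigroup S] (e : S → S) : Prop :=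
  ∀ x : S, (x * e x = x ∧ e x * x = x) ∧
    ∀ f : S, x * f = x → f * x = x → e x * f = e x ∧ f * e x = e x

/-- Condition (A2): for all x, x·s(x) = s(x)·x = e(x) and e(s(x)) = e(x). -/
def CondA2 {S : Type*} [Semigroup S] (e s : S → S) : Prop :=
  ∀ x : S, x * s x = e x ∧ s x * x = e x ∧ e (s x) = e x

/-- Condition (A3): e is multiplicative. -/
def CondA3 {S : Type*} [Semigroup S] (e : S → S) : Prop :=
  ∀ x y : S, e (x * y) = e x * e y

/-- under (A1) and (A2), each Clifford component
S_f = {a | e(a) = f} (f idempotent) contains f, is closed under multiplication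
and s, and is a group with identity f and inversion s; consequently S is the
disjoint union of these groups. -/
theorem stmt_2 {S : Type*} [Semigroup S] (e s : S → S)
    (h1 : CondA1 e) (h2 : CondA2 e s) :
    (∀ f : S, f * f = f →
      (e f = f) ∧
      (∀ a b : S, e a = f → e b = f → e (a * b) = f) ∧
      (∀ a : S, e a = f → e (s a) = f) ∧
      (∀ a : S, e a = f → f * a = a ∧ a * f = a) ∧
      (∀ a : S, e a = f → a * s a = f ∧ s a * a = f)) ∧
    (∀ a : S, e a * e a = e a) ∧
    (Set.univ = ⋃ f ∈ {f : S | f * f = f}, {a : S | e a = f}) ∧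
    (∀ f g : S, f * f = f → g * g = g → f ≠ g →
      {a : S | e a = f} ∩ {a : S | e a = g} = ∅) := by
  have idem : ∀ a : S, e a * e a = e a := fun a =>
    ((h1 a).2 (e a) (h1 a).1.1 (h1 a).1.2).1
  refine ⟨?_, idem, ?_, ?_⟩
  · intro f hf
    refine ⟨?_, ?_, ?_, ?_, ?_⟩
    · exact ((h1 f).2 f hf hf).1.symm.trans (h1 f).1.2
    · intro a b ha hb
      have haf : a * f = a := ha ▸ (h1 a).1.1
      have hfa : f * a = a := ha ▸ (h1 a).1.2
      have hbf : b * f = b := hb ▸ (h1 b).1.1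
      have h3 : e (a * b) * f = e (a * b) :=
        ((h1 (a * b)).2 f (by rw [mul_assoc, hbf]) (by rw [← mul_assoc, hfa])).1
      have h4 : (a * b) * (s b * s a) = f := by
        calc (a * b) * (s b * s a) = a * (b * s b) * s a := by simp only [mul_assoc]
          _ = f := by rw [(h2 b).1, hb, haf, (h2 a).1, ha]
      calc e (a * b) = e (a * b) * ((a * b) * (s b * s a)) := by rw [h4, h3]
        _ = (e (a * b) * (a * b)) * (s b * s a) := by rw [mul_assoc (e (a * b))]
        _ = f := by rw [(h1 (a * b)).1.2, h4]
    · intro a ha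
      rw [(h2 a).2.2, ha]
    · rintro a rfl
      exact ⟨(h1 a).1.2, (h1 a).1.1⟩
    · rintro a rfl
      exact ⟨(h2 a).1, (h2 a).2.1⟩
  · ext a
    simp [idem a]
  · intro f g _ _ hfg
    ext a
    simp only [Set.mem_inter_iff, Set.mem_setOf_eq, Set.mem_empty_iff_false, iff_false]
    rintro ⟨ha, hb⟩
    exact hfg (ha.symm.trans hb)
end

section
/- Let S be a semigroup such that every element of S belongs to some subset of S that is closed under multiplication and is a group under the induced multiplication (i.e., S is a union of groups). Then there exist functions e, s : S → S satisfying conditions (A1) and (A2). -/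
/-- A subset of a semigroup that is closed under multiplication and is a group
under the induced multiplication. -/
def IsSubgroupSet {S : Type*} [Semigroup S] (G : Set S) : Prop :=
  (∀ a ∈ G, ∀ b ∈ G, a * b ∈ G) ∧
  ∃ i ∈ G, (∀ a ∈ G, i * a = a ∧ a * i = a) ∧
    ∀ a ∈ G, ∃ b ∈ G, a * b = i ∧ b * a = i

/-- if a semigroup S is a union of groups, then there exist
functions e, s : S → S satisfying (A1) and (A2). -/
theorem stmt_3 {S : Type*} [Semigroup S]
    (h : ∀ x : S, ∃ G : Set S, x ∈ G ∧ IsSubgroupSet G) :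
    ∃ e s : S → S, CondA1 e ∧ CondA2 e s := by
  have h' : ∀ x : S, ∃ e s : S, x * e = x ∧ e * x = x ∧ x * s = e ∧ s * x = e ∧
      s * e = s ∧ e * s = s := by
    intro x
    obtain ⟨G, hx, -, i, hi, h1, h2⟩ := h x
    obtain ⟨b, hb, h3, h4⟩ := h2 x hx
    exact ⟨i, b, (h1 x hx).2, (h1 x hx).1, h3, h4, (h1 b hb).2, (h1 b hb).1⟩
  choose e s h1 h2 h3 h4 h5 h6 using h'
  refine ⟨e, s, fun x => ⟨⟨h1 x, h2 x⟩, fun f hf hf' => ⟨?_, ?_⟩⟩,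
    fun x => ⟨h3 x, h4 x, ?_⟩⟩
  · rw [← h4 x, mul_assoc, hf]
  · rw [← h3 x, ← mul_assoc, hf']
  · have a : e (s x) * e x = e (s x) := by
      conv_lhs => rw [← h4 (s x), mul_assoc, h5 x]
      exact h4 (s x)
    have b : e (s x) * e x = e x := by
      conv_lhs => rw [← h4 x, ← mul_assoc, h2 (s x)]
      exact h4 x
    exact a.symm.trans b
end

section
/- Let S be a semigroup with functions e, s : S → S satisfying conditions (A1) and (A2), and suppose that the idempotents of S commute pairwise, i.e., f·g = g·f for all f, g ∈ E(S). Then condition (A3) holds: e(x·y) = e(x)·e(y) for all x, y ∈ S; hence S is an assembly. -/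
/-- if (A1) and (A2) hold and the idempotents of S commute
pairwise, then (A3) holds, so S is an assembly. -/
theorem stmt_4 {S : Type*} [Semigroup S] (e s : S → S)
    (h1 : CondA1 e) (h2 : CondA2 e s)
    (hcomm : ∀ f g : S, f * f = f → g * g = g → f * g = g * f) :
    CondA3 e := by
  have ex : ∀ x, x * e x = x := fun x => (h1 x).1.1
  have ex' : ∀ x, e x * x = x := fun x => (h1 x).1.2
  have ei : ∀ x, e x * e x = e x := fun x => ((h1 x).2 (e x) (ex x) (ex' x)).1
  have xs : ∀ x, x * s x = e x := fun x => (h2 x).1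
  have sx : ∀ x, s x * x = e x := fun x => (h2 x).2.1
  have es : ∀ x, e x * s x = s x := fun x => by
    have := ex' (s x)
    rwa [(h2 x).2.2] at this
  have uniq : ∀ a b c : S, a * b * a = a → b * a * b = b → a * c * a = a → c * a * c = c →
      b = c := by
    intro a b c h1 h2 h3 h4
    have i1 : (a * b) * (a * b) = a * b := by rw [← mul_assoc, h1]
    have i2 : (a * c) * (a * c) = a * c := by rw [← mul_assoc, h3]
    have i3 : (b * a) * (b * a) = b * a := by rw [← mul_assoc, h2]
    have i4 : (c * a) * (c * a) = c * a := by rw [← mul_assoc, h4]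
    calc b = b * a * b := h2.symm
      _ = b * (a * c * a) * b := by rw [h3]
      _ = b * ((a * c) * (a * b)) := by simp only [mul_assoc]
      _ = b * ((a * b) * (a * c)) := by rw [hcomm _ _ i2 i1]
      _ = (b * a * b) * (a * c) := by simp only [mul_assoc]
      _ = b * (a * c) := by rw [h2]
      _ = b * a * (c * a * c) := by rw [h4, mul_assoc]
      _ = (b * a) * (c * a) * c := by simp only [mul_assoc]
      _ = (c * a) * (b * a) * c := by rw [hcomm _ _ i3 i4]
      _ = c * (a * b * a) * c := by simp only [mul_assoc]
      _ = c := by rw [h1, h4]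
  have central : ∀ f x : S, f * f = f → x * f = f * x := by
    intro f x hf
    have cm : f * e x = e x * f := hcomm _ _ hf (ei x)
    have hu : f * s x = s (x * f) := by
      apply uniq (x * f)
      · calc x * f * (f * s x) * (x * f) = x * (f * f) * (s x * x) * f := by
              simp only [mul_assoc]
          _ = x * (f * e x) * f := by rw [hf, sx, mul_assoc x]
          _ = (x * e x) * (f * f) := by rw [cm]; simp only [mul_assoc]
          _ = x * f := by rw [hf, ex]
      · calc f * s x * (x * f) * (f * s x) = f * (s x * x) * (f * f) * s x := by
              simp only [mul_assoc]
          _ = f * (e x * f) * s x := by rw [hf, sx, mul_assoc f]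
          _ = (f * f) * (e x * s x) := by rw [← cm]; simp only [mul_assoc]
          _ = f * s x := by rw [hf, es]
      · rw [xs, ex']
      · rw [sx, es]
    have k : (x * f) * (f * s x) = (f * s x) * (x * f) := by rw [hu, xs, sx]
    have k' : x * f * s x = f * e x := by
      calc x * f * s x = x * (f * f) * s x := by rw [hf]
        _ = (x * f) * (f * s x) := by simp only [mul_assoc]
        _ = (f * s x) * (x * f) := k
        _ = f * (s x * x) * f := by simp only [mul_assoc]
        _ = (f * f) * e x := by rw [sx, mul_assoc, ← cm, mul_assoc]
        _ = f * e x := by rw [hf]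
    calc x * f = x * (e x * f) := by rw [← mul_assoc, ex]
      _ = x * f * (s x * x) := by rw [← cm, sx, mul_assoc]
      _ = (x * f * s x) * x := by simp only [mul_assoc]
      _ = f * x := by rw [k', mul_assoc, ex']
  intro x y
  have a1 : x * y * (e x * e y) = x * y := by
    calc x * y * (e x * e y) = x * (y * e x) * e y := by simp only [mul_assoc]
      _ = (x * e x) * (y * e y) := by rw [central _ y (ei x)]; simp only [mul_assoc]
      _ = x * y := by rw [ex, ex]
  have a2 : e x * e y * (x * y) = x * y := by
    calc e x * e y * (x * y) = e x * (e y * x) * y := by simp only [mul_assoc]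
      _ = (e x * x) * (e y * y) := by rw [← central _ x (ei y)]; simp only [mul_assoc]
      _ = x * y := by rw [ex', ex']
  have a3 : x * y * (s y * s x) = e x * e y := by
    calc x * y * (s y * s x) = x * (y * s y) * s x := by simp only [mul_assoc]
      _ = x * (s x * e y) := by rw [xs, mul_assoc, central _ (s x) (ei y)]
      _ = e x * e y := by rw [← mul_assoc, xs]
  have a4 := ((h1 (x * y)).2 _ a1 a2).1
  rw [← a4]
  conv_lhs => rw [← a3, ← mul_assoc, ex']
  exact a3
end

section
/- Define on 2×2 rational matrices the operation X * Y = X·P·Y, where P = [[1, -1], [1, 1]] and · denotes ordinary matrix multiplication. Let A = [[1,0],[0,0]], B = [[0,1],[0,0]], C = [[0,0],[1,0]], D = [[0,0],[0,1]], and let S = {A, -A, B, -B, C, -C, D, -D}. Then: S is closed under *, the operation * is associative on S, and there exist functions e, s : S → S satisfying conditions (A1) and (A2) (indeed S is the union of the two-element groups {A,-A}, {B,-B}, {C,-C}, {D,-D} with identities A, B, -C, D respectively); but no function e : S → S can satisfy both (A1) and (A3), since B * C = A is idempotent while e(B) * e(C) = B * (-C) = -A is not idempotent. -/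
namespace Stmt5

/-- The sandwich matrix P of the Rees matrix semigroup. -/
def Pm : Matrix (Fin 2) (Fin 2) ℚ := !![1, -1; 1, 1]

def MA : Matrix (Fin 2) (Fin 2) ℚ := !![1, 0; 0, 0]
def MB : Matrix (Fin 2) (Fin 2) ℚ := !![0, 1; 0, 0]
def MC : Matrix (Fin 2) (Fin 2) ℚ := !![0, 0; 1, 0]
def MD : Matrix (Fin 2) (Fin 2) ℚ := !![0, 0; 0, 1]

/-- The sandwich multiplication X * Y = X·P·Y. -/
def op (X Y : Matrix (Fin 2) (Fin 2) ℚ) : Matrix (Fin 2) (Fin 2) ℚ := X * Pm * Y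

/-- The carrier set S = {A, -A, B, -B, C, -C, D, -D}. -/
def Sset : Set (Matrix (Fin 2) (Fin 2) ℚ) :=
  {MA, -MA, MB, -MB, MC, -MC, MD, -MD}

def SL : List (Matrix (Fin 2) (Fin 2) ℚ) :=
  [MA, -MA, MB, -MB, MC, -MC, MD, -MD]

lemma mem_SL (X : Matrix (Fin 2) (Fin 2) ℚ) : X ∈ Sset ↔ X ∈ SL := by
  simp [Sset, SL]

lemma op_assoc (X Y Z : Matrix (Fin 2) (Fin 2) ℚ) : op (op X Y) Z = op X (op Y Z) := by
  simp only [op, Matrix.mul_assoc]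

lemma closed : ∀ X ∈ SL, ∀ Y ∈ SL, op X Y ∈ SL := by decide +kernel

lemma a1 : ∀ x ∈ SL, op x (op x x) = x ∧ op (op x x) x = x ∧
    ∀ f ∈ SL, op x f = x → op f x = x →
      op (op x x) f = op x x ∧ op f (op x x) = op x x := by decide +kernel

lemma eB : ∀ f ∈ SL, op MB f = MB → op f MB = MB → f = MB := by decide +kernel

lemma eC : ∀ f ∈ SL, op MC f = MC → op f MC = MC → f = -MC := by decide +kernel

lemma wit : op MB MC = MA ∧ op MA MA = MA ∧ op MB (-MC) = -MA ∧ op (-MA) (-MA) ≠ -MA := by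
  decide +kernel

lemma nA : op MA (-MA) ≠ MA := by decide +kernel

/-- S is closed under the sandwich product, which is associative on S;
there exist functions e, s : S → S satisfying (A1) and (A2) on S (S is a union of
groups); but no function e : S → S can satisfy both (A1) and (A3), since
B * C = A is idempotent while e(B) * e(C) = B * (-C) = -A is not idempotent. -/
theorem stmt_5 :
    (∀ X ∈ Sset, ∀ Y ∈ Sset, op X Y ∈ Sset) ∧
    (∀ X ∈ Sset, ∀ Y ∈ Sset, ∀ Z ∈ Sset, op (op X Y) Z = op X (op Y Z)) ∧
    (∃ e s : Matrix (Fin 2) (Fin 2) ℚ → Matrix (Fin 2) (Fin 2) ℚ,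
      (∀ x ∈ Sset, e x ∈ Sset ∧ s x ∈ Sset) ∧
      -- (A1) on S
      (∀ x ∈ Sset, op x (e x) = x ∧ op (e x) x = x ∧
        ∀ f ∈ Sset, op x f = x → op f x = x →
          op (e x) f = e x ∧ op f (e x) = e x) ∧
      -- (A2) on S
      (∀ x ∈ Sset, op x (s x) = e x ∧ op (s x) x = e x ∧ e (s x) = e x)) ∧
    -- the witnessing computations
    (op MB MC = MA ∧ op MA MA = MA ∧ op MB (-MC) = -MA ∧ op (-MA) (-MA) ≠ -MA) ∧
    -- no e can satisfy both (A1) and (A3) on S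
    (¬ ∃ e : Matrix (Fin 2) (Fin 2) ℚ → Matrix (Fin 2) (Fin 2) ℚ,
      (∀ x ∈ Sset, e x ∈ Sset) ∧
      (∀ x ∈ Sset, op x (e x) = x ∧ op (e x) x = x ∧
        ∀ f ∈ Sset, op x f = x → op f x = x →
          op (e x) f = e x ∧ op f (e x) = e x) ∧
      (∀ x ∈ Sset, ∀ y ∈ Sset, e (op x y) = op (e x) (e y))) := by
  simp only [mem_SL]
  refine ⟨closed, fun X _ Y _ Z _ => op_assoc X Y Z, ⟨fun x => op x x, id, ?_, a1, ?_⟩, wit, ?_⟩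
  · exact fun x hx => ⟨closed x hx x hx, hx⟩
  · exact fun x _ => ⟨rfl, rfl, rfl⟩
  · rintro ⟨e, he, h1, h3⟩
    have hA : MA ∈ SL := by simp [SL]
    have hB : MB ∈ SL := by simp [SL]
    have hC : MC ∈ SL := by simp [SL]
    have h := h3 MB hB MC hC
    rw [eB _ (he _ hB) (h1 _ hB).1 (h1 _ hB).2.1, eC _ (he _ hC) (h1 _ hC).1 (h1 _ hC).2.1,
      wit.1, wit.2.2.1] at h
    have h2 := (h1 _ hA).1
    rw [h] at h2
    exact nA h2

end Stmt5
end

section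
/- Let S be a semigroup with functions e, s : S → S making it an assembly (i.e., satisfying (A1), (A2), (A3)). Then S is a band of groups: the map x ↦ e(x) is a semigroup homomorphism from S to itself, its image E(S) is a band (a subsemigroup all of whose elements are idempotent), and for each f ∈ E(S) the fiber e⁻¹({f}) is a group under the induced multiplication with identity f. -/
/-- an assembly is a band of groups: e is a semigroup homomorphism
of S to itself, its image is E(S), a band (subsemigroup of idempotents), and each
fiber e⁻¹({f}) (f idempotent) is a group with identity f. -/
theorem stmt_6 {S : Type*} [Semigroup S] (e s : S → S)
    (h1 : CondA1 e) (h2 : CondA2 e s) (h3 : CondA3 e) :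
    (∀ x y : S, e (x * y) = e x * e y) ∧
    (Set.range e = {f : S | f * f = f}) ∧
    (∀ f ∈ Set.range e, ∀ g ∈ Set.range e, f * g ∈ Set.range e) ∧
    (∀ f ∈ Set.range e, f * f = f) ∧
    (∀ f : S, f * f = f →
      (∀ a b : S, e a = f → e b = f → e (a * b) = f) ∧
      (∀ a : S, e a = f → f * a = a ∧ a * f = a) ∧
      (∀ a : S, e a = f → ∃ b : S, e b = f ∧ a * b = f ∧ b * a = f)) := by
  have hid : ∀ x, e x * e x = e x := fun x =>
    ((h1 x).2 (e x) (h1 x).1.1 (h1 x).1.2).1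
  have hfix : ∀ f, f * f = f → e f = f := fun f hf =>
    ((h1 f).2 f hf hf).1.symm.trans (h1 f).1.2
  refine ⟨h3, ?_, ?_, ?_, ?_⟩
  · ext f
    constructor
    · rintro ⟨x, rfl⟩
      exact hid x
    · intro hf
      exact ⟨f, hfix f hf⟩
  · rintro _ ⟨x, rfl⟩ _ ⟨y, rfl⟩
    exact ⟨x * y, h3 x y⟩
  · rintro _ ⟨x, rfl⟩
    exact hid x
  · intro f hf
    refine ⟨?_, ?_, ?_⟩
    · intro a b ha hb
      rw [h3, ha, hb, hf]
    · rintro a rfl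
      exact ⟨(h1 a).1.2, (h1 a).1.1⟩
    · rintro a rfl
      exact ⟨s a, (h2 a).2.2, (h2 a).1, (h2 a).2.1⟩
end

section
/- Let S be a semigroup. Then S admits functions e, s : S → S satisfying (A1), (A2), (A3) such that all idempotents of S commute pairwise, if and only if S is a semilattice of groups, i.e., there exist a commutative band B and a surjective semigroup homomorphism φ : S → B such that for every b ∈ B the fiber φ⁻¹({b}) is a group under the induced multiplication. -/
/-- a semigroup S admits an assembly structure (A1)-(A3) with
pairwise commuting idempotents iff S is a semilattice of groups, i.e. there
is a commutative band B and a surjective homomorphism φ : S → B all of whose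
fibers are groups. -/
theorem stmt_8 {S : Type u} [Semigroup S] :
    (∃ e s : S → S, CondA1 e ∧ CondA2 e s ∧ CondA3 e ∧
      ∀ f g : S, f * f = f → g * g = g → f * g = g * f) ↔
    (∃ (B : Type u) (mul : B → B → B) (φ : S → B),
      (∀ a b c : B, mul (mul a b) c = mul a (mul b c)) ∧
      (∀ b : B, mul b b = b) ∧
      (∀ b c : B, mul b c = mul c b) ∧
      (∀ x y : S, φ (x * y) = mul (φ x) (φ y)) ∧
      Function.Surjective φ ∧
      ∀ b : B, ∃ i : S, φ i = b ∧
        (∀ a : S, φ a = b → i * a = a ∧ a * i = a) ∧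
        ∀ a : S, φ a = b → ∃ c : S, φ c = b ∧ a * c = i ∧ c * a = i) := by
  constructor
  · rintro ⟨e, s, h1, h2, h3, hc⟩
    have he : ∀ x, e x * e x = e x := fun x => by
      conv_lhs => rw [← (h2 x).1, ← mul_assoc, (h2 x).1, (h1 x).1.2]
      exact (h2 x).1
    have hf : ∀ f, f * f = f → e f = f := fun f h => by
      rw [← ((h1 f).2 f h h).1, (h1 f).1.2]
    have hm : ∀ f g : S, f * f = f → g * g = g → (f * g) * (f * g) = f * g := by
      intro f g h k
      calc (f * g) * (f * g) = f * (g * f) * g := by simp only [mul_assoc]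
        _ = (f * f) * (g * g) := by rw [hc g f k h]; simp only [mul_assoc]
        _ = f * g := by rw [h, k]
    refine ⟨{f : S // f * f = f}, fun a b => ⟨a.1 * b.1, hm _ _ a.2 b.2⟩,
      fun x => ⟨e x, he x⟩, ?_, ?_, ?_, ?_, ?_, ?_⟩
    · intro a b c
      exact Subtype.ext (mul_assoc _ _ _)
    · intro b
      exact Subtype.ext b.2
    · intro b c
      exact Subtype.ext (hc _ _ b.2 c.2)
    · intro x y
      exact Subtype.ext (h3 x y)
    · intro b
      exact ⟨b.1, Subtype.ext (hf _ b.2)⟩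
    · rintro ⟨b, hb⟩
      refine ⟨b, Subtype.ext (hf _ hb), ?_, ?_⟩
      · intro a ha
        have ha : e a = b := congrArg Subtype.val ha
        subst ha
        exact ⟨(h1 a).1.2, (h1 a).1.1⟩
      · intro a ha
        have ha : e a = b := congrArg Subtype.val ha
        subst ha
        exact ⟨s a, Subtype.ext (h2 a).2.2, (h2 a).1, (h2 a).2.1⟩
  · rintro ⟨B, mul, φ, has, hid, hcm, hφ, -, hG⟩
    choose i hi hone hinv using hG
    choose s hs using fun x : S => hinv (φ x) x rfl
    have hone1 : ∀ a, i (φ a) * a = a := fun a => (hone _ a rfl).1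
    have hone2 : ∀ a, a * i (φ a) = a := fun a => (hone _ a rfl).2
    have hidem : ∀ f, f * f = f → i (φ f) = f := by
      intro f h
      calc i (φ f) = s f * f := (hs f).2.2.symm
        _ = s f * f * f := by rw [mul_assoc, h]
        _ = f := by rw [(hs f).2.2, hone1]
    have hii : ∀ b, i b * i b = i b := fun b => (hone b _ (hi b)).1
    have hl : ∀ a b, mul b a = b → i b * i a = i b := by
      intro a b h
      have hp : φ (i b * i a) = b := by rw [hφ, hi, hi, h]
      have h4 := (hone b _ hp).2
      have := hidem (i b * i a) (by rw [← mul_assoc, h4, mul_assoc, hii])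
      rw [← this, hp]
    have key : ∀ a b, i a * i b = i (mul a b) := by
      intro a b
      have hp : φ (i a * i b) = mul a b := by rw [hφ, hi, hi]
      rw [← (hone _ _ hp).1, ← mul_assoc, hl a, hl b]
      · rw [has, hid]
      · rw [hcm a b, has, hid]
    refine ⟨fun x => i (φ x), s, ?_, ?_, ?_, ?_⟩
    · intro x
      refine ⟨⟨hone2 x, hone1 x⟩, ?_⟩
      intro f h k
      constructor
      · show i (φ x) * f = i (φ x)
        rw [← (hs x).2.2, mul_assoc, h]
      · show f * i (φ x) = i (φ x)
        rw [← (hs x).2.1, ← mul_assoc, k]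
    · intro x
      exact ⟨(hs x).2.1, (hs x).2.2, congrArg i (hs x).1⟩
    · intro x y
      show i (φ (x * y)) = i (φ x) * i (φ y)
      rw [key, hφ]
    · intro f g hf hg
      rw [← hidem f hf, ← hidem g hg, key, key, hcm]
end

section
/- Let S be a semigroup with functions e, s : S → S satisfying (A1), (A2) and (A3) (an assembly). Then the idempotents of S commute pairwise (f·g = g·f for all f, g ∈ E(S)) if and only if every idempotent of S is central (f·x = x·f for all f ∈ E(S) and all x ∈ S). -/
/-- in an assembly, the idempotents commute pairwise iff every
idempotent is central. -/
theorem stmt_9 {S : Type*} [Semigroup S] (e s : S → S)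
    (h1 : CondA1 e) (h2 : CondA2 e s) (h3 : CondA3 e) :
    (∀ f g : S, f * f = f → g * g = g → f * g = g * f) ↔
    (∀ f : S, f * f = f → ∀ x : S, f * x = x * f) := by
  constructor
  · intro hc f hf x
    have hef : e f = f := by
      have a := ((h1 f).2 f hf hf).1
      have b := (h1 f).1.2
      rw [← a, b]
    have hx := (h1 x).1
    have hee : e x * e x = e x := ((h1 x).2 (e x) hx.1 hx.2).1
    have hcm := hc f (e x) hf hee
    have p : f * x = f * x * f := by
      have q := (h1 (f * x)).1.1
      rw [h3, hef, hcm, ← mul_assoc, mul_assoc f x (e x), hx.1] at q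
      exact q.symm
    have p' : x * f = f * x * f := by
      have q := (h1 (x * f)).1.2
      rw [h3, hef, ← hcm, mul_assoc, ← mul_assoc (e x) x f, hx.2, ← mul_assoc] at q
      exact q.symm
    rw [p', ← p]
  · intro h f g hf _
    exact h f hf g
end

section
/- Let A and B be semigroups with functions e_A, s_A : A → A and e_B, s_B : B → B satisfying (A1), (A2) and (A3) (assemblies), and let φ : A → B be a semigroup homomorphism, i.e., φ(x·y) = φ(x)·φ(y) for all x, y ∈ A. Then for every x ∈ A: φ(e_A(x)) = e_B(φ(x)) and φ(s_A(x)) = s_B(φ(x)). -/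
/-- a semigroup homomorphism between assemblies respects e and s. -/
theorem stmt_15 {A B : Type*} [Semigroup A] [Semigroup B]
    (eA sA : A → A) (eB sB : B → B)
    (hA1 : CondA1 eA) (hA2 : CondA2 eA sA) (hA3 : CondA3 eA)
    (hB1 : CondA1 eB) (hB2 : CondA2 eB sB) (hB3 : CondA3 eB)
    (φ : A → B) (hφ : ∀ x y : A, φ (x * y) = φ x * φ y) :
    ∀ x : A, φ (eA x) = eB (φ x) ∧ φ (sA x) = sB (φ x) := by
  intro x
  obtain ⟨hx1, hx2, hx3⟩ := hA2 x
  obtain ⟨⟨a1, a2⟩, -⟩ := hA1 x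
  obtain ⟨⟨b1, -⟩, -⟩ := hA1 (sA x)
  obtain ⟨⟨c1, c2⟩, c3⟩ := hB1 (φ x)
  obtain ⟨y1, y2, y3⟩ := hB2 (φ x)
  obtain ⟨⟨-, d2⟩, -⟩ := hB1 (sB (φ x))
  rw [y3] at d2
  rw [hx3] at b1
  have h1 : φ (eA x) = eB (φ x) := by
    have h := (c3 (φ (eA x)) (by rw [← hφ, a1]) (by rw [← hφ, a2])).1
    rw [← h, ← hx1, hφ, ← mul_assoc, c2]
  refine ⟨h1, ?_⟩
  calc φ (sA x) = φ (sA x) * φ (eA x) := by rw [← hφ, b1]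
    _ = φ (sA x) * (φ x * sB (φ x)) := by rw [h1, y1]
    _ = φ (eA x) * sB (φ x) := by rw [← mul_assoc, ← hφ, hx2]
    _ = sB (φ x) := by rw [h1, d2]
end

section
/- Let A and B be semigroups with functions e_A, s_A : A → A and e_B, s_B : B → B satisfying (A1), (A2) and (A3) (assemblies), and let φ : A → B be a semigroup homomorphism. Then the image φ(A) is a subassembly of B: it is nonempty and closed under multiplication, e_B and s_B. -/
/-- A subassembly: a nonempty subset closed under multiplication, e and s. -/
def IsSubassembly {A : Type*} [Semigroup A] (e s : A → A) (B : Set A) : Prop :=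
  B.Nonempty ∧ (∀ x ∈ B, ∀ y ∈ B, x * y ∈ B) ∧ (∀ x ∈ B, e x ∈ B) ∧ (∀ x ∈ B, s x ∈ B)

/-- the image of a semigroup homomorphism between assemblies is a
subassembly of the codomain. -/
theorem stmt_16 {A B : Type*} [Semigroup A] [Semigroup B] [Nonempty A]
    (eA sA : A → A) (eB sB : B → B)
    (hA1 : CondA1 eA) (hA2 : CondA2 eA sA) (hA3 : CondA3 eA)
    (hB1 : CondA1 eB) (hB2 : CondA2 eB sB) (hB3 : CondA3 eB)
    (φ : A → B) (hφ : ∀ x y : A, φ (x * y) = φ x * φ y) :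
    IsSubassembly eB sB (Set.range φ) := by
  have he : ∀ x, eB (φ x) = φ (eA x) := by
    intro x
    have h1 : φ x * φ (eA x) = φ x := by rw [← hφ, (hA1 x).1.1]
    have h2 : φ (eA x) * φ x = φ x := by rw [← hφ, (hA1 x).1.2]
    have h3 := ((hB1 (φ x)).2 _ h1 h2).2
    have h4 : φ (sA x) * φ x = φ (eA x) := by rw [← hφ, (hA2 x).2.1]
    rw [← h3, ← h4, mul_assoc, (hB1 (φ x)).1.1]
  have hs : ∀ x, sB (φ x) = φ (sA x) := by
    intro x
    have h1 : sB (φ x) * eB (φ x) = sB (φ x) := by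
      have h := (hB1 (sB (φ x))).1.1
      rwa [(hB2 (φ x)).2.2] at h
    have h2 : eA x * sA x = sA x := by
      have h := (hA1 (sA x)).1.2
      rwa [(hA2 x).2.2] at h
    calc sB (φ x) = sB (φ x) * eB (φ x) := h1.symm
      _ = sB (φ x) * (φ x * φ (sA x)) := by rw [he, ← hφ, (hA2 x).1]
      _ = φ (eA x) * φ (sA x) := by rw [← mul_assoc, (hB2 (φ x)).2.1, he]
      _ = φ (sA x) := by rw [← hφ, h2]
  refine ⟨Set.range_nonempty φ, ?_, ?_, ?_⟩
  · rintro _ ⟨a, rfl⟩ _ ⟨b, rfl⟩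
    exact ⟨a * b, hφ a b⟩
  · rintro _ ⟨a, rfl⟩
    exact ⟨eA a, (he a).symm⟩
  · rintro _ ⟨a, rfl⟩
    exact ⟨sA a, (hs a).symm⟩
end

section
/- Let A and B be semigroups with functions e_A, s_A : A → A and e_B, s_B : B → B satisfying (A1), (A2) and (A3) (assemblies), let φ : A → B be a semigroup homomorphism, and define Ker(φ) = φ⁻¹(φ(E(A))) = {x ∈ A : φ(x) = φ(f) for some idempotent f of A}. Then E(A) ⊆ Ker(φ), and φ is injective if and only if φ is injective on E(A) and Ker(φ) = E(A). -/
/-- for a homomorphism φ of assemblies, with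
Ker(φ) = {x : ∃ idempotent f, φ(x) = φ(f)}, one has E(A) ⊆ Ker(φ), and φ is
injective iff φ is injective on E(A) and Ker(φ) = E(A). -/
theorem stmt_17 {A B : Type*} [Semigroup A] [Semigroup B]
    (eA sA : A → A) (eB sB : B → B)
    (hA1 : CondA1 eA) (hA2 : CondA2 eA sA) (hA3 : CondA3 eA)
    (hB1 : CondA1 eB) (hB2 : CondA2 eB sB) (hB3 : CondA3 eB)
    (φ : A → B) (hφ : ∀ x y : A, φ (x * y) = φ x * φ y) :
    ({f : A | f * f = f} ⊆ {x : A | ∃ f : A, f * f = f ∧ φ x = φ f}) ∧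
    (Function.Injective φ ↔
      (Set.InjOn φ {f : A | f * f = f} ∧
        {x : A | ∃ f : A, f * f = f ∧ φ x = φ f} = {f : A | f * f = f})) := by
  have idem : ∀ x, eA x * eA x = eA x := fun x =>
    ((hA1 x).2 (eA x) (hA1 x).1.1 (hA1 x).1.2).1
  have efix : ∀ f, f * f = f → eA f = f := fun f hf => by
    have h1 := ((hA1 f).2 f hf hf).1
    rw [← h1, (hA1 f).1.2]
  have hsub : {f : A | f * f = f} ⊆ {x : A | ∃ f : A, f * f = f ∧ φ x = φ f} :=
    fun f hf => ⟨f, hf, rfl⟩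
  have he : ∀ x, φ (eA x) = eB (φ x) := fun x => by
    have h1 : φ x * φ (eA x) = φ x := by rw [← hφ, (hA1 x).1.1]
    have h2 : φ (eA x) * φ x = φ x := by rw [← hφ, (hA1 x).1.2]
    have h3 := ((hB1 (φ x)).2 _ h1 h2).1
    rw [← h3, ← (hA2 x).1, hφ, ← mul_assoc, (hB1 (φ x)).1.2]
  refine ⟨hsub, fun hinj => ⟨hinj.injOn, ?_⟩, ?_⟩
  · refine Set.Subset.antisymm ?_ hsub
    rintro x ⟨f, hf, hxf⟩
    rw [hinj hxf]
    exact hf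
  · rintro ⟨hinj, hker⟩ x y hxy
    have hexy : eA x = eA y := hinj (idem x) (idem y) (by rw [he, he, hxy])
    have hid : (x * sA y) * (x * sA y) = x * sA y := by
      have hm : x * sA y ∈ {x : A | ∃ f : A, f * f = f ∧ φ x = φ f} :=
        ⟨eA y, idem y, by rw [hφ, hxy, ← hφ, (hA2 y).1]⟩
      rw [hker] at hm
      exact hm
    have h1 : x * sA y = eA y := by
      rw [← efix _ hid, hA3, (hA2 y).2.2, hexy, idem]
    calc x = x * eA y := by rw [← hexy, (hA1 x).1.1]
      _ = x * sA y * y := by rw [mul_assoc, (hA2 y).2.1]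
      _ = y := by rw [h1, (hA1 y).1.2]
end
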